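/- arXiv:2202.09699 — 4 statements merged into one kernel-verified Lean document; each statement's English description precedes it below -/
import Mathlib

section
/- Forward–backward view equivalence for eligibility traces (finite horizon). Let T be a natural number, let r : ℕ → ℝ and c : ℕ → ℝ be real sequences, and let g : ℕ → ℝ^d be a sequence of vectors. Define G : ℕ → ℝ backward by G(T) = r(T) and G(t) = r(t) + c(t+1) · G(t+1) for t < T, and define the eligibility trace e : ℕ → ℝ^d forward by e(0) = g(0) and e(t) = c(t) • e(t−1) + g(t) for 1 ≤ t ≤ T. Then ∑_{t=0}^{T} G(t) • g(t) = ∑_{t=0}^{T} r(t) • e(t) (equality of vectors in ℝ^d). -/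
section Semimodule

variable {R M : Type*} [Semiring R] [AddCommMonoid M] [Module R M]
  {r c G : ℕ → R} {g e : ℕ → M}

-- Summation by parts: the boundary term `G n • e n` credits the return still to come at time `n`
-- to all the gradients accumulated in the trace so far.
theorem sum_return_smul_eq_sum_smul_trace_add (n : ℕ)
    (hG : ∀ t < n, G t = r t + G (t + 1) * c (t + 1))
    (he0 : e 0 = g 0) (he : ∀ t < n, e (t + 1) = c (t + 1) • e t + g (t + 1)) :
    ∑ t ∈ Finset.range (n + 1), G t • g t =
      ∑ t ∈ Finset.range n, r t • e t + G n • e n := by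
  induction n with
  | zero => simp [he0]
  | succ n ih =>
    have sum_upto_n : ∑ t ∈ Finset.range (n + 1), G t • g t =
        ∑ t ∈ Finset.range n, r t • e t + G n • e n :=
      ih (fun t ht => hG t (by lia)) (fun t ht => he t (by lia))
    have boundary_step : G n • e n + G (n + 1) • g (n + 1) =
        r n • e n + G (n + 1) • e (n + 1) := by
      rw [hG n n.lt_succ_self, he n n.lt_succ_self, add_smul, mul_smul, smul_add, add_assoc]
    rw [Finset.sum_range_succ, sum_upto_n, add_assoc, boundary_step, ← add_assoc,
      ← Finset.sum_range_succ]

-- The factor order in `G (t + 1) * c (t + 1)` is forced when `R` is not commutative: the decay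
-- acts on the trace before the return does.
theorem forward_backward_equivalence_general (T : ℕ) (hGT : G T = r T)
    (hG : ∀ t < T, G t = r t + G (t + 1) * c (t + 1))
    (he0 : e 0 = g 0) (he : ∀ t < T, e (t + 1) = c (t + 1) • e t + g (t + 1)) :
    ∑ t ∈ Finset.range (T + 1), G t • g t = ∑ t ∈ Finset.range (T + 1), r t • e t := by
  rw [sum_return_smul_eq_sum_smul_trace_add T hG he0 he, hGT, ← Finset.sum_range_succ]

end Semimodule

/-- Forward–backward view equivalence for eligibility traces (finite horizon). -/
theorem forward_backward_equivalence (d T : ℕ) (r c : ℕ → ℝ) (g : ℕ → (Fin d → ℝ))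
    (G : ℕ → ℝ) (hGT : G T = r T)
    (hG : ∀ t, t < T → G t = r t + c (t + 1) * G (t + 1))
    (e : ℕ → (Fin d → ℝ)) (he0 : e 0 = g 0)
    (he : ∀ t, 1 ≤ t → t ≤ T → e t = c t • e (t - 1) + g t) :
    ∑ t ∈ Finset.range (T + 1), G t • g t = ∑ t ∈ Finset.range (T + 1), r t • e t :=
  forward_backward_equivalence_general T hGT (fun t ht => by rw [hG t ht, mul_comm])
    he0 (fun t ht => he (t + 1) t.succ_pos ht)
end

section
/- Column sums of the key matrix of selective TD(λ, ω). Let S be a nonempty finite type, P a row-stochastic S×S real matrix with stationary distribution d, and Γ, Λ diagonal S×S matrices with diagonal entries γ(s), λ(s) ∈ [0,1] such that γ(s)·λ(s) < 1 for all s. Let D be the diagonal matrix with entries d(s), and define the key matrix K = D·(I − Γ·Λ)·(I − P·Γ·Λ)^{-1}·(I − P·Γ). Then for every state s', ∑_{s} K(s, s') = d(s')·(1 − γ(s')); equivalently 1^⊤ K = d^⊤ (I − Γ). In particular, if d(s) > 0 and γ(s) < 1 for all s, then every column sum of K is positive. -/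
/-!
Invariance `dᵀ P = dᵀ` lets `P` be inserted after `dᵀ`, so that
`1ᵀ D (I - Γ Λ) = dᵀ (I - Γ Λ) = dᵀ (I - P Γ Λ)`. This cancels the inverse in the key matrix and
leaves `dᵀ (I - P Γ) = dᵀ (I - Γ)`. The inverse is genuine because the rows of `P Γ Λ` have
absolute sum less than one, which makes `I - P Γ Λ` strictly diagonally dominant.
-/

open Matrix

theorem vecMul_one_sub_mul_of_vecMul_eq_self {S R : Type*} [Fintype S] [DecidableEq S] [Ring R]
    {d : S → R} {P : Matrix S S R} (hd : d ᵥ* P = d) (A : Matrix S S R) :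
    d ᵥ* (1 - P * A) = d ᵥ* (1 - A) := by
  rw [vecMul_sub, vecMul_sub, ← vecMul_vecMul, hd]

section CommRing

variable {S R : Type*} [Fintype S] [DecidableEq S] [CommRing R]

/-- The key matrix `D (I - Γ Λ) (I - P Γ Λ)⁻¹ (I - P Γ)` of the expected update of selective
TD(λ, ω) with the coupled weighting `ω = 1 - γ λ`. The factors are arbitrary square matrices here;
in the algorithm `D`, `Γ` and `Λ` are diagonal. The inverse is `0` if `I - P Γ Λ` is singular. -/
noncomputable def keyMatrix (P D Γ Λ : Matrix S S R) : Matrix S S R :=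
  D * (1 - Γ * Λ) * (1 - P * Γ * Λ)⁻¹ * (1 - P * Γ)

theorem vecMul_keyMatrix {v d : S → R} {P D Γ Λ : Matrix S S R} (hv : v ᵥ* D = d)
    (hd : d ᵥ* P = d) (hdet : IsUnit (1 - P * Γ * Λ).det) :
    v ᵥ* keyMatrix P D Γ Λ = d ᵥ* (1 - Γ) :=
  calc
    v ᵥ* keyMatrix P D Γ Λ
        = d ᵥ* (1 - Γ * Λ) ᵥ* (1 - P * Γ * Λ)⁻¹ ᵥ* (1 - P * Γ) := by
      simp only [keyMatrix, ← vecMul_vecMul, hv]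
    _ = d ᵥ* (1 - P * Γ * Λ) ᵥ* (1 - P * Γ * Λ)⁻¹ ᵥ* (1 - P * Γ) := by
      rw [← vecMul_one_sub_mul_of_vecMul_eq_self hd (Γ * Λ), Matrix.mul_assoc P]
    _ = d ᵥ* (1 - P * Γ) := by
      rw [vecMul_vecMul d, mul_nonsing_inv _ hdet, vecMul_one]
    _ = d ᵥ* (1 - Γ) := vecMul_one_sub_mul_of_vecMul_eq_self hd Γ

end CommRing

theorem sum_norm_row_mul_diagonal_lt_one {m n R : Type*} [Fintype n] [DecidableEq n]
    [NonUnitalNormedRing R] {A : Matrix m n R} {w : n → R} {i : m}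
    (hA : ∑ j, ‖A i j‖ ≤ 1) (hw : ∀ j, ‖w j‖ < 1) : ∑ j, ‖(A * diagonal w) i j‖ < 1 := by
  simp only [mul_diagonal]
  by_cases hrow : ∀ j, A i j = 0
  · simp [hrow]
  · obtain ⟨j₀, hj₀⟩ := not_forall.mp hrow
    refine lt_of_lt_of_le (Finset.sum_lt_sum (fun j _ => ?_) ⟨j₀, Finset.mem_univ j₀, ?_⟩) hA
    · exact (norm_mul_le _ _).trans (mul_le_of_le_one_right (norm_nonneg _) (hw j).le)
    · exact (norm_mul_le _ _).trans_lt (mul_lt_of_lt_one_right (norm_pos_iff.mpr hj₀) (hw j₀))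

section NormedField

variable {S 𝕜 : Type*} [Fintype S] [DecidableEq S] [NormedField 𝕜]

theorem det_one_sub_ne_zero_of_sum_norm_row_lt_one {A : Matrix S S 𝕜}
    (hA : ∀ i, ∑ j, ‖A i j‖ < 1) : (1 - A).det ≠ 0 := by
  refine det_ne_zero_of_sum_row_lt_diag fun i => ?_
  calc
    ∑ j ∈ Finset.univ.erase i, ‖(1 - A) i j‖ = ∑ j ∈ Finset.univ.erase i, ‖A i j‖ :=
      Finset.sum_congr rfl fun j hj => by
        rw [Matrix.sub_apply, one_apply_ne (Finset.ne_of_mem_erase hj).symm, zero_sub, norm_neg]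
    _ < 1 - ‖A i i‖ := by
      rw [lt_sub_iff_add_lt, Finset.sum_erase_add _ _ (Finset.mem_univ i)]
      exact hA i
    _ ≤ ‖(1 - A) i i‖ := by
      rw [Matrix.sub_apply, one_apply_eq, ← norm_one (α := 𝕜)]
      exact norm_sub_norm_le _ _

theorem key_matrix_column_sums_general {P : Matrix S S 𝕜} (hP : ∀ s, ∑ s', ‖P s s'‖ ≤ 1)
    {d : S → 𝕜} (hd : d ᵥ* P = d) {γ lam : S → 𝕜} (hγlam : ∀ s, ‖γ s * lam s‖ < 1) (s' : S) :
    ∑ s, keyMatrix P (diagonal d) (diagonal γ) (diagonal lam) s s' = d s' * (1 - γ s') := by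
  have hdet : (1 - P * diagonal γ * diagonal lam).det ≠ 0 := by
    rw [Matrix.mul_assoc, diagonal_mul_diagonal]
    exact det_one_sub_ne_zero_of_sum_norm_row_lt_one fun s =>
      sum_norm_row_mul_diagonal_lt_one (hP s) hγlam
  have hone : 1 ᵥ* diagonal d = d := by
    ext s
    rw [vecMul_diagonal, Pi.one_apply, one_mul]
  calc
    ∑ s, keyMatrix P (diagonal d) (diagonal γ) (diagonal lam) s s'
        = (1 ᵥ* keyMatrix P (diagonal d) (diagonal γ) (diagonal lam)) s' :=
      (one_dotProduct _).symm
    _ = (d ᵥ* (1 - diagonal γ)) s' := by rw [vecMul_keyMatrix hone hd hdet.isUnit]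
    _ = d s' * (1 - γ s') := by
      rw [vecMul_sub, vecMul_one, Pi.sub_apply, vecMul_diagonal, mul_one_sub]

end NormedField

/-- Column sums of the key matrix of selective TD(λ, ω). -/
theorem key_matrix_column_sums
    {S : Type*} [Fintype S] [Nonempty S] [DecidableEq S]
    (P : Matrix S S ℝ)
    (hP_nonneg : ∀ s s', 0 ≤ P s s') (hP_row : ∀ s, ∑ s', P s s' = 1)
    (d : S → ℝ) (hd_nonneg : ∀ s, 0 ≤ d s) (hd_sum : ∑ s, d s = 1)
    (hd_stat : ∀ s', ∑ s, d s * P s s' = d s')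
    (γ lam : S → ℝ)
    (hγ : ∀ s, 0 ≤ γ s ∧ γ s ≤ 1) (hlam : ∀ s, 0 ≤ lam s ∧ lam s ≤ 1)
    (hγlam : ∀ s, γ s * lam s < 1)
    (Γ Λ D K : Matrix S S ℝ)
    (hΓ : Γ = Matrix.diagonal γ) (hΛ : Λ = Matrix.diagonal lam)
    (hD : D = Matrix.diagonal d)
    (hK : K = D * (1 - Γ * Λ) * (1 - P * Γ * Λ)⁻¹ * (1 - P * Γ)) :
    (∀ s', ∑ s, K s s' = d s' * (1 - γ s'))
      ∧ ((∀ s, 0 < d s) → (∀ s, γ s < 1) → ∀ s', 0 < ∑ s, K s s') := by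
  subst hΓ hΛ hD hK
  have hP_norm : ∀ s, ∑ s', ‖P s s'‖ ≤ 1 := fun s => by
    simp only [Real.norm_of_nonneg (hP_nonneg s _), hP_row s, le_refl]
  have hγlam_norm : ∀ s, ‖γ s * lam s‖ < 1 := fun s => by
    simpa only [Real.norm_of_nonneg (mul_nonneg (hγ s).1 (hlam s).1)] using hγlam s
  have hcol := key_matrix_column_sums_general hP_norm (funext hd_stat) hγlam_norm
  refine ⟨hcol, fun hd_pos hγ_lt s' => ?_⟩
  exact (mul_pos (hd_pos s') (sub_pos.mpr (hγ_lt s'))).trans_eq (hcol s').symm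
end

section
/- Componentwise bound on the follow-on vector under a bounded state-dependent discount. Let S be a nonempty finite type, P a row-stochastic S×S real matrix with stationary distribution d, and Γ a diagonal S×S matrix with diagonal entries γ(s) satisfying 0 ≤ γ(s) ≤ β for some β < 1. Then for every k ≥ 0 the vector (Γ P^⊤)^k d is componentwise at most β^k · d; consequently I − Γ P^⊤ is invertible and the vector d^f = (I − Γ P^⊤)^{-1} d = ∑_{k=0}^{∞} (Γ P^⊤)^k d satisfies d^f(s) ≤ (1 − β)^{-1} d(s) for every state s. -/
open Matrix

/-!
For an entrywise nonnegative matrix `A` and `β ≥ 0`, an inequality `A v ≤ β v` iterates to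
`A ^ k v ≤ β ^ k v`. Write `A = Γ Pᵀ`. Taking `v = d` bounds the terms of the follow-on series.
Taking `v = 1` and `Aᵀ = P Γ`, whose row sums are at most `β`, bounds the entries of the powers
by `β ^ k`, so that the Neumann series of `A` converges to `(1 - A)⁻¹`. Summing the first bound
over `k` gives the factor `(1 - β)⁻¹`.
-/

section OrderedSemiring

variable {m n R : Type*} [Fintype n] [CommSemiring R] [PartialOrder R] [IsOrderedRing R]

theorem mulVec_le_mulVec_of_nonneg {A : Matrix m n R} (hA : ∀ i j, 0 ≤ A i j) {v w : n → R}
    (hvw : v ≤ w) : A *ᵥ v ≤ A *ᵥ w :=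
  fun i => dotProduct_le_dotProduct_of_nonneg_left hvw (hA i)

theorem pow_mulVec_le_pow_smul [DecidableEq n] {A : Matrix n n R} (hA : ∀ i j, 0 ≤ A i j)
    {β : R} (hβ : 0 ≤ β) {v : n → R} (hv : A *ᵥ v ≤ β • v) (k : ℕ) :
    (A ^ k) *ᵥ v ≤ β ^ k • v := by
  induction k with
  | zero => simp
  | succ k ih =>
    calc (A ^ (k + 1)) *ᵥ v = A *ᵥ ((A ^ k) *ᵥ v) := by rw [mulVec_mulVec, pow_succ']
      _ ≤ A *ᵥ (β ^ k • v) := mulVec_le_mulVec_of_nonneg hA ih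
      _ = β ^ k • (A *ᵥ v) := mulVec_smul A (β ^ k) v
      _ ≤ β ^ k • (β • v) := smul_le_smul_of_nonneg_left hv (pow_nonneg hβ k)
      _ = β ^ (k + 1) • v := by rw [smul_smul, pow_succ]

theorem diagonal_mul_transpose_mulVec_le_smul [DecidableEq n] {P : Matrix n n R} {d γ : n → R}
    {β : R} (hd : 0 ≤ d) (hdP : d ᵥ* P ≤ d) (hγ : 0 ≤ γ) (hγβ : ∀ i, γ i ≤ β) :
    (diagonal γ * Pᵀ) *ᵥ d ≤ β • d := by
  intro i
  calc ((diagonal γ * Pᵀ) *ᵥ d) i = γ i * (d ᵥ* P) i := by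
        rw [← mulVec_mulVec, mulVec_diagonal, mulVec_transpose]
    _ ≤ γ i * d i := mul_le_mul_of_nonneg_left (hdP i) (hγ i)
    _ ≤ β * d i := mul_le_mul_of_nonneg_right (hγβ i) (hd i)

theorem mul_diagonal_mulVec_one_le_smul [DecidableEq n] {P : Matrix m n R} {γ : n → R} {β : R}
    (hP : ∀ i j, 0 ≤ P i j) (hP_row : P *ᵥ 1 ≤ 1) (hβ : 0 ≤ β) (hγβ : ∀ i, γ i ≤ β) :
    (P * diagonal γ) *ᵥ 1 ≤ β • (1 : m → R) := by
  have diagonal_mulVec_one_le : diagonal γ *ᵥ 1 ≤ β • (1 : n → R) := fun i => by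
    simpa [mulVec_diagonal] using hγβ i
  calc (P * diagonal γ) *ᵥ 1 = P *ᵥ (diagonal γ *ᵥ 1) := (mulVec_mulVec _ _ _).symm
    _ ≤ P *ᵥ (β • 1) := mulVec_le_mulVec_of_nonneg hP diagonal_mulVec_one_le
    _ = β • (P *ᵥ 1) := mulVec_smul P β 1
    _ ≤ β • 1 := smul_le_smul_of_nonneg_left hP_row hβ

end OrderedSemiring

theorem isUnit_one_sub_of_summable_pow {R : Type*} [Ring R] [TopologicalSpace R]
    [IsTopologicalRing R] [T2Space R] {x : R} (hx : Summable (x ^ ·)) : IsUnit (1 - x) :=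
  isUnit_iff_exists.2 ⟨∑' k : ℕ, x ^ k, hx.one_sub_mul_tsum_pow, hx.tsum_pow_mul_one_sub⟩

theorem hasSum_pow_mulVec_of_summable_pow {n R : Type*} [Fintype n] [DecidableEq n] [CommRing R]
    [TopologicalSpace R] [IsTopologicalRing R] [T2Space R] {A : Matrix n n R}
    (hA : Summable (A ^ ·)) (v : n → R) :
    HasSum (fun k : ℕ => (A ^ k) *ᵥ v) ((1 - A)⁻¹ *ᵥ v) := by
  have hasSum_inv : HasSum (A ^ ·) (1 - A)⁻¹ := by
    rw [inv_eq_right_inv hA.one_sub_mul_tsum_pow]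
    exact hA.hasSum
  exact hasSum_inv.map (mulVec.addMonoidHomLeft v) (continuous_id.matrix_mulVec continuous_const)

section Real

variable {n : Type*} [Fintype n] [DecidableEq n] {A : Matrix n n ℝ} {β : ℝ}

theorem summable_pow_of_mulVec_le_smul (hA : ∀ i j, 0 ≤ A i j) (hβ₀ : 0 ≤ β) (hβ₁ : β < 1)
    {w : n → ℝ} (hw : ∀ i, 0 < w i) (hAw : A *ᵥ w ≤ β • w) : Summable (A ^ ·) := by
  refine Pi.summable.2 fun i => Pi.summable.2 fun j => ?_
  have pow_apply_le (k : ℕ) : (A ^ k) i j ≤ β ^ k * (w i / w j) := by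
    rw [← mul_div_assoc, le_div_iff₀ (hw j)]
    calc (A ^ k) i j * w j ≤ ((A ^ k) *ᵥ w) i :=
          Finset.single_le_sum (f := fun l => (A ^ k) i l * w l)
            (fun l _ => mul_nonneg (pow_apply_nonneg hA k i l) (hw l).le) (Finset.mem_univ j)
      _ ≤ β ^ k * w i := pow_mulVec_le_pow_smul hA hβ₀ hAw k i
  exact .of_nonneg_of_le (fun k => pow_apply_nonneg hA k i j) pow_apply_le
    ((summable_geometric_of_lt_one hβ₀ hβ₁).mul_right _)

theorem inv_one_sub_mulVec_le_smul (hA : ∀ i j, 0 ≤ A i j) (hA_sum : Summable (A ^ ·))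
    (hβ₀ : 0 ≤ β) (hβ₁ : β < 1) {v : n → ℝ} (hv : A *ᵥ v ≤ β • v) :
    (1 - A)⁻¹ *ᵥ v ≤ (1 - β)⁻¹ • v :=
  hasSum_le (pow_mulVec_le_pow_smul hA hβ₀ hv) (hasSum_pow_mulVec_of_summable_pow hA_sum v)
    ((hasSum_geometric_of_lt_one hβ₀ hβ₁).smul_const v)

theorem summable_pow_diagonal_mul_transpose {P : Matrix n n ℝ} {γ : n → ℝ}
    (hP : ∀ i j, 0 ≤ P i j) (hP_row : P *ᵥ 1 ≤ 1) (hγ : 0 ≤ γ) (hγβ : ∀ i, γ i ≤ β)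
    (hβ₀ : 0 ≤ β) (hβ₁ : β < 1) : Summable fun k : ℕ => (diagonal γ * Pᵀ) ^ k := by
  have mul_diagonal_nonneg (i j : n) : 0 ≤ (P * diagonal γ) i j := by
    rw [mul_diagonal]
    exact mul_nonneg (hP i j) (hγ j)
  have summable_transpose : Summable fun k : ℕ => (P * diagonal γ) ^ k :=
    summable_pow_of_mulVec_le_smul mul_diagonal_nonneg hβ₀ hβ₁ (fun _ => one_pos)
      (mul_diagonal_mulVec_one_le_smul hP hP_row hβ₀ hγβ)
  simpa only [transpose_pow, transpose_mul, diagonal_transpose] using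
    summable_transpose.matrix_transpose

end Real

theorem followon_componentwise_bound_general {S : Type*} [Fintype S] [Nonempty S] [DecidableEq S]
    {P : Matrix S S ℝ} (hP : ∀ s s', 0 ≤ P s s') (hP_row : P *ᵥ 1 ≤ 1)
    {d : S → ℝ} (hd : 0 ≤ d) (hdP : d ᵥ* P ≤ d)
    {γ : S → ℝ} {β : ℝ} (hβ : β < 1) (hγ : 0 ≤ γ) (hγβ : ∀ s, γ s ≤ β) :
    (∀ k : ℕ, ((diagonal γ * Pᵀ) ^ k) *ᵥ d ≤ β ^ k • d)
      ∧ IsUnit (1 - diagonal γ * Pᵀ)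
      ∧ HasSum (fun k : ℕ => ((diagonal γ * Pᵀ) ^ k) *ᵥ d) ((1 - diagonal γ * Pᵀ)⁻¹ *ᵥ d)
      ∧ (1 - diagonal γ * Pᵀ)⁻¹ *ᵥ d ≤ (1 - β)⁻¹ • d := by
  have hβ₀ : 0 ≤ β := (hγ (Classical.arbitrary S)).trans (hγβ _)
  have nonneg (s s' : S) : 0 ≤ (diagonal γ * Pᵀ) s s' := by
    rw [diagonal_mul]
    exact mul_nonneg (hγ s) (hP s' s)
  have mulVec_le := diagonal_mul_transpose_mulVec_le_smul hd hdP hγ hγβ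
  have summable := summable_pow_diagonal_mul_transpose hP hP_row hγ hγβ hβ₀ hβ
  exact ⟨pow_mulVec_le_pow_smul nonneg hβ₀ mulVec_le,
    isUnit_one_sub_of_summable_pow summable,
    hasSum_pow_mulVec_of_summable_pow summable d,
    inv_one_sub_mulVec_le_smul nonneg summable hβ₀ hβ mulVec_le⟩

/-- Componentwise bound on the follow-on vector under a bounded state-dependent discount. -/
theorem followon_componentwise_bound
    {S : Type*} [Fintype S] [Nonempty S] [DecidableEq S]
    (P : Matrix S S ℝ)
    (hP_nonneg : ∀ s s', 0 ≤ P s s') (hP_row : ∀ s, ∑ s', P s s' = 1)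
    (d : S → ℝ) (hd_nonneg : ∀ s, 0 ≤ d s) (hd_sum : ∑ s, d s = 1)
    (hd_stat : ∀ s', ∑ s, d s * P s s' = d s')
    (γ : S → ℝ) (β : ℝ) (hβ : β < 1) (hγ : ∀ s, 0 ≤ γ s ∧ γ s ≤ β)
    (Γ : Matrix S S ℝ) (hΓ : Γ = Matrix.diagonal γ) :
    (∀ k : ℕ, ∀ s, ((Γ * Pᵀ) ^ k).mulVec d s ≤ β ^ k * d s)
      ∧ IsUnit (1 - Γ * Pᵀ)
      ∧ (1 - Γ * Pᵀ)⁻¹.mulVec d = ∑' k : ℕ, ((Γ * Pᵀ) ^ k).mulVec d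
      ∧ ∀ s, (1 - Γ * Pᵀ)⁻¹.mulVec d s ≤ (1 - β)⁻¹ * d s := by
  subst hΓ
  have mulVec_one_le : P *ᵥ 1 ≤ 1 :=
    (mem_rowStochastic.1 (mem_rowStochastic_iff_sum.2 ⟨hP_nonneg, hP_row⟩)).2.le
  obtain ⟨pow_le, isUnit, hasSum, inv_le⟩ := followon_componentwise_bound_general hP_nonneg
    mulVec_one_le hd_nonneg (fun s' => (hd_stat s').le) hβ (fun s => (hγ s).1) (fun s => (hγ s).2)
  exact ⟨pow_le, isUnit, hasSum.tsum_eq.symm, inv_le⟩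
end

section
/- Sparse expected eligibility traces are temporally extended backward models. Let S be a nonempty finite type, let P̄ be a row-stochastic S×S real matrix (the time-reversed transition kernel), let γ, λ : S → ℝ satisfy 0 ≤ γ(s)λ(s) ≤ β for some β < 1, define ω(s) = 1 − γ(s)λ(s), and let C be an S×n real matrix (the cumulant, whose row at state s is the gradient ∇V(s)). Write Δ_{γλ} and Δ_ω for the diagonal matrices with entries γ(s)λ(s) and ω(s). Then there is a unique S×n matrix Z satisfying Z = Δ_ω·C + Δ_{γλ}·P̄·Z, namely Z = (I − Δ_{γλ}·P̄)^{-1}·Δ_ω·C = ∑_{k=0}^{∞} ((I − Δ_ω)·P̄)^k · Δ_ω · C, and this Z also satisfies the backward-option-model equation Z = Δ_ω·C + (I − Δ_ω)·P̄·Z. -/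
open Matrix

/-!
The rows of `Δ_{γλ} P̄` have absolute sum below `1`, so its `ℓ^∞` operator norm is below `1` and
the Neumann series `∑ (Δ_{γλ} P̄) ^ k` converges to `(1 - Δ_{γλ} P̄)⁻¹`. Invertibility of
`1 - Δ_{γλ} P̄` makes `Z = B + Δ_{γλ} P̄ Z` equivalent to `Z = (1 - Δ_{γλ} P̄)⁻¹ B`. The coupling
`ω = 1 - γλ` reads `1 - Δ_ω = Δ_{γλ}`, so the trace equation and the option-model equation coincide.
-/

section LinearFixedPoint

variable {m n R : Type*} [Fintype m] [DecidableEq m] [CommRing R]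

theorem matrix_eq_add_mul_iff {A : Matrix m m R} (hA : IsUnit (1 - A)) {B Z : Matrix m n R} :
    Z = B + A * Z ↔ Z = (1 - A)⁻¹ * B := by
  have hdet : IsUnit (1 - A).det := (isUnit_iff_isUnit_det _).mp hA
  calc
    Z = B + A * Z ↔ (1 - A) * Z = B := by rw [Matrix.sub_mul, Matrix.one_mul, sub_eq_iff_eq_add]
    _ ↔ Z = (1 - A)⁻¹ * B :=
      ⟨fun h => by rw [← h, nonsing_inv_mul_cancel_left _ _ hdet],
        fun h => by rw [h, mul_nonsing_inv_cancel_left _ _ hdet]⟩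

theorem existsUnique_matrix_eq_add_mul {A : Matrix m m R} (hA : IsUnit (1 - A))
    (B : Matrix m n R) : ∃! Z : Matrix m n R, Z = B + A * Z :=
  ⟨(1 - A)⁻¹ * B, (matrix_eq_add_mul_iff hA).mpr rfl, fun _ => (matrix_eq_add_mul_iff hA).mp⟩

end LinearFixedPoint

theorem one_sub_diagonal {n R : Type*} [DecidableEq n] [Ring R] (d : n → R) :
    1 - diagonal d = diagonal (1 - d) := by
  rw [← diagonal_one, diagonal_sub, Pi.sub_def, Pi.one_def]

theorem hasSum_matrix_mul_right {ι l m n R : Type*} [Fintype m] [NonUnitalNonAssocSemiring R]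
    [TopologicalSpace R] [IsTopologicalSemiring R] {f : ι → Matrix l m R} {A : Matrix l m R}
    (hf : HasSum f A) (B : Matrix m n R) : HasSum (fun i => f i * B) (A * B) :=
  hf.map (mulRightLinearMap l ℕ B) (continuous_id.matrix_mul continuous_const)

section NeumannSeries

attribute [local instance] Matrix.linftyOpSeminormedAddCommGroup Matrix.linftyOpNormedRing

theorem linfty_opNorm_lt_iff {m n α : Type*} [Fintype m] [Fintype n] [SeminormedAddCommGroup α]
    {A : Matrix m n α} {r : ℝ} (hr : 0 < r) : ‖A‖ < r ↔ ∀ i, ∑ j, ‖A i j‖ < r := by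
  lift r to NNReal using hr.le
  rw [linfty_opNorm_def, NNReal.coe_lt_coe, Finset.sup_lt_iff (by simpa using hr)]
  simp [← NNReal.coe_lt_coe]

variable {m R : Type*} [Fintype m] [DecidableEq m]

theorem hasSummableGeomSeries_matrix [NormedRing R] [CompleteSpace R] :
    HasSummableGeomSeries (Matrix m m R) :=
  -- Instance search would use the product uniformity, equal to that of the norm only by unfolding.
  have : @CompleteSpace (Matrix m m R) PseudoMetricSpace.toUniformSpace :=
    inferInstanceAs (CompleteSpace (m → m → R))
  inferInstance

theorem isUnit_one_sub_of_sum_norm_row_lt_one [NormedRing R] [CompleteSpace R]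
    {A : Matrix m m R} (hA : ∀ i, ∑ j, ‖A i j‖ < 1) : IsUnit (1 - A) :=
  have := hasSummableGeomSeries_matrix (m := m) (R := R)
  isUnit_one_sub_of_norm_lt_one ((linfty_opNorm_lt_iff one_pos).mpr hA)

theorem hasSum_pow_inv_one_sub_of_sum_norm_row_lt_one [NormedCommRing R] [CompleteSpace R]
    {A : Matrix m m R} (hA : ∀ i, ∑ j, ‖A i j‖ < 1) :
    HasSum (fun k : ℕ => A ^ k) (1 - A)⁻¹ := by
  have := hasSummableGeomSeries_matrix (m := m) (R := R)
  rw [nonsing_inv_eq_ringInverse]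
  exact hasSum_geom_series_inverse A ((linfty_opNorm_lt_iff one_pos).mpr hA)

end NeumannSeries

theorem sum_norm_mul_of_mem_stdSimplex {ι : Type*} [Fintype ι] {p : ι → ℝ}
    (hp : p ∈ stdSimplex ℝ ι) (c : ℝ) : ∑ i, ‖c * p i‖ = ‖c‖ := by
  simp_rw [norm_mul, Real.norm_of_nonneg (hp.1 _), ← Finset.mul_sum, hp.2, mul_one]

theorem sparse_expected_traces_are_backward_models_general
    {S m R : Type*} [Fintype S] [DecidableEq S] [NormedCommRing R] [CompleteSpace R]
    (Pbar : Matrix S S R) (γ lam : S → R)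
    (hrow : ∀ s, ∑ s', ‖γ s * lam s * Pbar s s'‖ < 1)
    (ω : S → R) (hω : ∀ s, ω s = 1 - γ s * lam s)
    (C : Matrix S m R)
    (Dγl Dω : Matrix S S R)
    (hDγl : Dγl = diagonal (fun s => γ s * lam s))
    (hDω : Dω = diagonal ω) :
    (∃! Z : Matrix S m R, Z = Dω * C + Dγl * Pbar * Z)
      ∧ ((1 - Dγl * Pbar)⁻¹ * (Dω * C)
          = Dω * C + Dγl * Pbar * ((1 - Dγl * Pbar)⁻¹ * (Dω * C)))
      ∧ HasSum (fun k : ℕ => ((1 - Dω) * Pbar) ^ k * (Dω * C))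
          ((1 - Dγl * Pbar)⁻¹ * (Dω * C))
      ∧ ((1 - Dγl * Pbar)⁻¹ * (Dω * C)
          = Dω * C + (1 - Dω) * Pbar * ((1 - Dγl * Pbar)⁻¹ * (Dω * C))) := by
  have hcoupling : 1 - Dω = Dγl := by
    rw [hDω, hDγl, one_sub_diagonal]
    exact congrArg diagonal (funext fun s => by simp [hω s])
  have hcontract : ∀ s, ∑ s', ‖(Dγl * Pbar) s s'‖ < 1 := by
    simpa only [hDγl, diagonal_mul] using hrow
  have hunit : IsUnit (1 - Dγl * Pbar) := isUnit_one_sub_of_sum_norm_row_lt_one hcontract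
  have hfixed : (1 - Dγl * Pbar)⁻¹ * (Dω * C)
      = Dω * C + Dγl * Pbar * ((1 - Dγl * Pbar)⁻¹ * (Dω * C)) :=
    (matrix_eq_add_mul_iff hunit).mpr rfl
  have hneumann : HasSum (fun k : ℕ => (Dγl * Pbar) ^ k) (1 - Dγl * Pbar)⁻¹ :=
    hasSum_pow_inv_one_sub_of_sum_norm_row_lt_one hcontract
  rw [hcoupling]
  exact ⟨existsUnique_matrix_eq_add_mul hunit _, hfixed, hasSum_matrix_mul_right hneumann _, hfixed⟩

/-- Sparse expected eligibility traces are temporally extended backward models. -/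
theorem sparse_expected_traces_are_backward_models
    {S : Type*} [Fintype S] [Nonempty S] [DecidableEq S] (n : ℕ)
    (Pbar : Matrix S S ℝ)
    (hP_nonneg : ∀ s s', 0 ≤ Pbar s s') (hP_row : ∀ s, ∑ s', Pbar s s' = 1)
    (γ lam : S → ℝ) (β : ℝ) (hβ : β < 1)
    (hγlam : ∀ s, 0 ≤ γ s * lam s ∧ γ s * lam s ≤ β)
    (ω : S → ℝ) (hω : ∀ s, ω s = 1 - γ s * lam s)
    (C : Matrix S (Fin n) ℝ)
    (Dγl Dω : Matrix S S ℝ)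
    (hDγl : Dγl = Matrix.diagonal (fun s => γ s * lam s))
    (hDω : Dω = Matrix.diagonal ω) :
    (∃! Z : Matrix S (Fin n) ℝ, Z = Dω * C + Dγl * Pbar * Z)
      ∧ ((1 - Dγl * Pbar)⁻¹ * (Dω * C)
          = Dω * C + Dγl * Pbar * ((1 - Dγl * Pbar)⁻¹ * (Dω * C)))
      ∧ ((1 - Dγl * Pbar)⁻¹ * (Dω * C)
          = ∑' k : ℕ, ((1 - Dω) * Pbar) ^ k * (Dω * C))
      ∧ ((1 - Dγl * Pbar)⁻¹ * (Dω * C)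
          = Dω * C + (1 - Dω) * Pbar * ((1 - Dγl * Pbar)⁻¹ * (Dω * C))) := by
  have hrow (s : S) : ∑ s', ‖γ s * lam s * Pbar s s'‖ < 1 := by
    rw [sum_norm_mul_of_mem_stdSimplex ⟨hP_nonneg s, hP_row s⟩, Real.norm_of_nonneg (hγlam s).1]
    exact (hγlam s).2.trans_lt hβ
  obtain ⟨hunique, hfixed, hseries, hoption⟩ :=
    sparse_expected_traces_are_backward_models_general Pbar γ lam hrow ω hω C Dγl Dω hDγl hDω
  exact ⟨hunique, hfixed, hseries.tsum_eq.symm, hoption⟩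
end
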